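/- (Scattering lemma.) Let s ≥ r ≥ 1 be integers. There exist a matrix W ∈ ℝ^{s×r} and two absolute constants c_0 ∈ (1/2, 1) and c_1 > 0 such that ‖W‖_F ≤ 1 and, for every subset B ⊂ {1,…,s} with |B| ≥ c_0 s and every q ∈ [1,2], the submatrix W_{B*} of rows of W indexed by B satisfies ‖W_{B*}‖_{S_q} ≥ c_1 r^{1/q − 1/2}. -/

import Mathlib

open MeasureTheory ProbabilityTheory Matrix Set
open scoped ENNReal NNReal

noncomputable section

/-- Euclidean (ℓ₂) norm of a finitely indexed real vector. -/
def l2norm {I : Type*} [Fintype I] (v : I → ℝ) : ℝ := Real.sqrt (∑ i, v i ^ 2)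

/-- Frobenius norm of a real matrix. -/
def frobNorm {I J : Type*} [Fintype I] [Fintype J] (M : Matrix I J ℝ) : ℝ :=
  Real.sqrt (∑ i, ∑ j, M i j ^ 2)

/-- ℓ₂/ℓ₁ norm: the sum of the ℓ₂ norms of the rows. -/
def norm21 {I J : Type*} [Fintype I] [Fintype J] (M : Matrix I J ℝ) : ℝ :=
  ∑ i, l2norm (M i)

open Classical in
/-- Row support: indices of nonzero rows. -/
def rowSupport {I J : Type*} [Fintype I] [Fintype J] (M : Matrix I J ℝ) : Finset I :=
  Finset.univ.filter (fun i => M i ≠ 0)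

/-- The j-th largest singular value (j ≥ 1), via the Courant–Fischer max–min
characterization: `σ_j(M) = max_{dim V = j} min_{v ∈ V, ‖v‖=1} ‖Mv‖`. -/
def singularValue {I J : Type*} [Fintype I] [Fintype J] (M : Matrix I J ℝ) (j : ℕ) : ℝ :=
  sSup { t | ∃ V : Submodule ℝ (J → ℝ), Module.finrank ℝ V = j ∧
    t = sInf { u | ∃ v ∈ V, l2norm v = 1 ∧ u = l2norm (M.mulVec v) } }

/-- Operator norm (largest singular value). -/
def opNorm {I J : Type*} [Fintype I] [Fintype J] (M : Matrix I J ℝ) : ℝ :=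
  sSup { t | ∃ v : J → ℝ, l2norm v = 1 ∧ t = l2norm (M.mulVec v) }

/-- Schatten-q norm. -/
def schattenNorm {I J : Type*} [Fintype I] [Fintype J] (M : Matrix I J ℝ) (q : ℝ) : ℝ :=
  (∑ i ∈ Finset.Icc 1 (min (Fintype.card I) (Fintype.card J)), singularValue M i ^ q) ^ (1 / q)

/-- Squared lower k-sparse Riesz constant `κ₋²(k)`:
the minimum over column subsets B with |B| = k of the smallest eigenvalue of X_B' X_B. -/
def kappaMinusSq {n p : ℕ} (X : Matrix (Fin n) (Fin p) ℝ) (k : ℕ) : ℝ :=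
  sInf { t | ∃ B : Finset (Fin p), B.card = k ∧ ∃ v : Fin p → ℝ,
    (∀ i, i ∉ B → v i = 0) ∧ l2norm v = 1 ∧ t = l2norm (X.mulVec v) ^ 2 }

/-- Squared upper k-sparse Riesz constant `κ₊²(k)`. -/
def kappaPlusSq {n p : ℕ} (X : Matrix (Fin n) (Fin p) ℝ) (k : ℕ) : ℝ :=
  sSup { t | ∃ B : Finset (Fin p), B.card = k ∧ ∃ v : Fin p → ℝ,
    (∀ i, i ∉ B → v i = 0) ∧ l2norm v = 1 ∧ t = l2norm (X.mulVec v) ^ 2 }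

def kappaMinus {n p : ℕ} (X : Matrix (Fin n) (Fin p) ℝ) (k : ℕ) : ℝ :=
  Real.sqrt (kappaMinusSq X k)

def kappaPlus {n p : ℕ} (X : Matrix (Fin n) (Fin p) ℝ) (k : ℕ) : ℝ :=
  Real.sqrt (kappaPlusSq X k)

/-- Membership in the parameter space Θ(s, r, d, γ): rank r, all nonzero singular values in
(d, γd], and at most s nonzero rows. (Singular values are automatically nonincreasing.) -/
def memTheta {p m : ℕ} (A : Matrix (Fin p) (Fin m) ℝ) (s r : ℕ) (d γ : ℝ) : Prop :=
  A.rank = r ∧ 0 < d ∧ singularValue A 1 ≤ γ * d ∧ d < singularValue A r ∧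
    (rowSupport A).card ≤ s

/-- `V` is a matrix of top-r right singular vectors of `M`: the columns of `V` are orthonormal
eigenvectors of `MᵀM`, the j-th column with eigenvalue `σ_j(M)²`. -/
def IsRightSingularVectors {I J : Type*} [Fintype I] [Fintype J] {r : ℕ}
    (M : Matrix I J ℝ) (V : Matrix J (Fin r) ℝ) : Prop :=
  Vᵀ * V = 1 ∧ ∀ j : Fin r,
    (Mᵀ * M).mulVec (fun i => V i j) = (singularValue M (j.1 + 1)) ^ 2 • (fun i => V i j)

/-- `U` is a matrix of top-r left singular vectors of `M`. -/
def IsLeftSingularVectors {I J : Type*} [Fintype I] [Fintype J] {r : ℕ}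
    (M : Matrix I J ℝ) (U : Matrix I (Fin r) ℝ) : Prop :=
  IsRightSingularVectors Mᵀ U

instance matrixMeasurableSpace {n m : ℕ} : MeasurableSpace (Matrix (Fin n) (Fin m) ℝ) :=
  (inferInstance : MeasurableSpace (Fin n → Fin m → ℝ))

/-- Law of an n×m random matrix with i.i.d. N(0, v) entries. -/
def gaussianMatrix (n m : ℕ) (v : ℝ≥0) : Measure (Matrix (Fin n) (Fin m) ℝ) :=
  Measure.pi fun _ : Fin n => Measure.pi fun _ : Fin m => gaussianReal 0 v

open Classical in
/-- Kullback–Leibler divergence D(P‖Q). -/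
def klDivM {Ω : Type*} [MeasurableSpace Ω] (P Q : Measure Ω) : ℝ≥0∞ :=
  if P ≪ Q ∧ Integrable (fun x => Real.log (P.rnDeriv Q x).toReal) P
  then ENNReal.ofReal (∫ x, Real.log (P.rnDeriv Q x).toReal ∂P)
  else ∞

/-- ε-packing number of T with respect to the distance ρ: the maximal cardinality of a subset
of T whose pairwise ρ-distances are all at least ε. -/
def packingNumber {α : Type*} (T : Set α) (ρ : α → α → ℝ) (ε : ℝ) : ℕ :=
  sSup { k | ∃ S : Finset α, ↑S ⊆ T ∧ (∀ x ∈ S, ∀ y ∈ S, x ≠ y → ε ≤ ρ x y) ∧ S.card = k }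

/-- Moore–Penrose pseudoinverse (characterized by the four Penrose equations). -/
def IsMoorePenrose {k : ℕ} (M Mi : Matrix (Fin k) (Fin k) ℝ) : Prop :=
  M * Mi * M = M ∧ Mi * M * Mi = Mi ∧ (M * Mi)ᵀ = M * Mi ∧ (Mi * M)ᵀ = Mi * M

lemma l2norm_nonneg' {I : Type*} [Fintype I] (v : I → ℝ) : 0 ≤ l2norm v := Real.sqrt_nonneg _

lemma l2norm_mulVec_le {I J : Type*} [Fintype I] [Fintype J] (M : Matrix I J ℝ) (v : J → ℝ)
    (hv : l2norm v = 1) : l2norm (M.mulVec v) ≤ frobNorm M := by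
  have hv2 : ∑ j, v j ^ 2 = 1 := by
    unfold l2norm at hv
    exact Real.sqrt_eq_one.mp hv
  unfold l2norm frobNorm
  apply Real.sqrt_le_sqrt
  apply Finset.sum_le_sum
  intro i _
  have := Finset.sum_mul_sq_le_sq_mul_sq Finset.univ (fun j => M i j) v
  rw [hv2, mul_one] at this
  simpa [Matrix.mulVec, dotProduct] using this

lemma singularValue_nonneg' {I J : Type*} [Fintype I] [Fintype J] (M : Matrix I J ℝ) (k : ℕ) :
    0 ≤ singularValue M k := by
  apply Real.sSup_nonneg
  rintro t ⟨V, -, rfl⟩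
  apply Real.sInf_nonneg
  rintro u ⟨v, -, -, rfl⟩
  exact l2norm_nonneg' _

lemma exists_unit {J : Type*} [Fintype J] (V : Submodule ℝ (J → ℝ))
    (hV : 1 ≤ Module.finrank ℝ V) : ∃ v ∈ V, l2norm v = 1 := by
  have hne : V ≠ ⊥ := by
    rintro rfl
    simp at hV
  obtain ⟨v, hv, hv0⟩ := V.ne_bot_iff.mp hne
  have hpos : 0 < ∑ j, v j ^ 2 := by
    obtain ⟨j, hj⟩ := Function.ne_iff.mp hv0
    have hj' : v j ≠ 0 := by simpa using hj
    exact Finset.sum_pos' (fun _ _ => sq_nonneg _) ⟨j, Finset.mem_univ _, by positivity⟩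
  refine ⟨(Real.sqrt (∑ j, v j ^ 2))⁻¹ • v, V.smul_mem _ hv, ?_⟩
  unfold l2norm
  rw [Real.sqrt_eq_one]
  simp only [Pi.smul_apply, smul_eq_mul, mul_pow, ← Finset.mul_sum]
  rw [inv_pow, Real.sq_sqrt hpos.le]
  field_simp

lemma le_singularValue {I J : Type*} [Fintype I] [Fintype J] (M : Matrix I J ℝ)
    (k : ℕ) (hk : 1 ≤ k) (a : ℝ) (V : Submodule ℝ (J → ℝ)) (hV : Module.finrank ℝ V = k)
    (h : ∀ v ∈ V, l2norm v = 1 → a ≤ l2norm (M.mulVec v)) : a ≤ singularValue M k := by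
  have h1 : a ≤ sInf { u | ∃ v ∈ V, l2norm v = 1 ∧ u = l2norm (M.mulVec v) } := by
    obtain ⟨v, hv, hv1⟩ := exists_unit V (by omega)
    refine le_csInf ⟨l2norm (M.mulVec v), v, hv, hv1, rfl⟩ ?_
    rintro u ⟨v, hv, hv1, rfl⟩
    exact h v hv hv1
  refine h1.trans (le_csSup ⟨frobNorm M, ?_⟩ ⟨V, hV, rfl⟩)
  rintro t ⟨V', hV', rfl⟩
  obtain ⟨v, hv, hv1⟩ := exists_unit V' (by omega)
  refine le_trans (csInf_le (a := l2norm (M.mulVec v)) ⟨0, ?_⟩ ⟨v, hv, hv1, rfl⟩)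
    (l2norm_mulVec_le M v hv1)
  rintro u ⟨v, -, -, rfl⟩
  exact l2norm_nonneg' _

lemma exists_coordSub {J : Type*} [Fintype J] [DecidableEq J] (T : Finset J) :
    ∃ V : Submodule ℝ (J → ℝ), Module.finrank ℝ V = T.card ∧
      ∀ v ∈ V, ∀ j, j ∉ T → v j = 0 := by
  refine ⟨Submodule.span ℝ (Set.range (fun j : T => (Pi.single (j : J) (1 : ℝ) : J → ℝ))), ?_, ?_⟩
  · rw [finrank_span_eq_card]
    · simp
    · exact (Pi.linearIndependent_single_one J ℝ).comp (fun j : T => (j : J))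
        Subtype.val_injective
  · intro v hv j hj
    induction hv using Submodule.span_induction with
    | mem x hx =>
      obtain ⟨i, rfl⟩ := hx
      have : j ≠ i := fun h => hj (h ▸ i.2)
      simp [this]
    | zero => rfl
    | add x y _ _ hx hy => simp [hx, hy]
    | smul a x _ hx => simp [hx]

lemma final_num (r m n : ℕ) (hr : 1 ≤ r) (hm : r ≤ 2 * m) (hmn : m ≤ n) (f : ℕ → ℝ)
    (hf0 : ∀ i, 0 ≤ f i) (hf : ∀ i, 1 ≤ i → i ≤ m → 1 / (2 * Real.sqrt r) ≤ f i)
    (q : ℝ) (hq : q ∈ Set.Icc (1 : ℝ) 2) :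
    1 / 4 * (r : ℝ) ^ (1 / q - 1 / 2) ≤ (∑ i ∈ Finset.Icc 1 n, f i ^ q) ^ (1 / q) := by
  have hq0 : 0 < q := by linarith [hq.1]
  have hr0 : (0 : ℝ) < r := by exact_mod_cast hr
  have hq1 : 1 / q ≤ 1 := by rw [div_le_one hq0]; exact hq.1
  have hqi : 0 ≤ 1 / q := by positivity
  have hm' : (r : ℝ) / 2 ≤ m := by
    have : (r : ℝ) ≤ 2 * m := by exact_mod_cast hm
    linarith
  set a := 1 / (2 * Real.sqrt r) with ha
  have ha0 : 0 ≤ a := by positivity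
  have h1 : (r : ℝ) / 2 * a ^ q ≤ ∑ i ∈ Finset.Icc 1 n, f i ^ q := by
    calc (r : ℝ) / 2 * a ^ q ≤ m * a ^ q := by gcongr
      _ = ∑ i ∈ Finset.Icc 1 m, a ^ q := by simp
      _ ≤ ∑ i ∈ Finset.Icc 1 m, f i ^ q := by
        apply Finset.sum_le_sum
        intro i hi
        rw [Finset.mem_Icc] at hi
        exact Real.rpow_le_rpow ha0 (hf i hi.1 hi.2) hq0.le
      _ ≤ _ := by
        apply Finset.sum_le_sum_of_subset_of_nonneg
        · exact Finset.Icc_subset_Icc_right hmn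
        · intro i _ _
          exact Real.rpow_nonneg (hf0 i) _
  refine le_trans ?_ (Real.rpow_le_rpow (by positivity) h1 hqi)
  rw [Real.mul_rpow (by positivity) (by positivity), ← Real.rpow_mul ha0,
    mul_one_div_cancel hq0.ne', Real.rpow_one, Real.div_rpow hr0.le (by norm_num),
    Real.rpow_sub hr0, ← Real.sqrt_eq_rpow, ha]
  have h2 : (2 : ℝ) ^ (1 / q) ≤ 2 := by
    simpa using Real.rpow_le_rpow_of_exponent_le (x := 2) (by norm_num) hq1
  have h3 : (0 : ℝ) < 2 ^ (1 / q) := by positivity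
  have h4 : 0 < Real.sqrt r := Real.sqrt_pos.mpr hr0
  calc 1 / 4 * ((r : ℝ) ^ (1 / q) / Real.sqrt r)
      = (r : ℝ) ^ (1 / q) / 2 * (1 / (2 * Real.sqrt r)) := by field_simp; norm_num
    _ ≤ _ := by gcongr

lemma fiber_card (s r : ℕ) (hr : 1 ≤ r) (hrs : r ≤ s) (j : Fin r) :
    s ≤ 2 * r * (Finset.univ.filter (fun i : Fin s => (i : ℕ) % r = j)).card := by
  have h1 : s / r ≤ (Finset.univ.filter (fun i : Fin s => (i : ℕ) % r = j)).card := by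
    have hlt : ∀ k ∈ Finset.range (s / r), r * k + j < s := by
      intro k hk
      rw [Finset.mem_range] at hk
      have h1 := Nat.mul_div_le s r
      have h2 : r * (k + 1) ≤ r * (s / r) := Nat.mul_le_mul_left _ hk
      have := j.2
      rw [mul_add] at h2
      omega
    have := Finset.card_le_card_of_injOn (s := (Finset.range (s / r)).attach)
      (t := Finset.univ.filter (fun i : Fin s => (i : ℕ) % r = j))
      (fun k => (⟨r * k.1 + j, hlt k.1 k.2⟩ : Fin s))
      (by
        intro k _
        simp [Nat.mod_eq_of_lt j.2])
      (by
        intro k _ l _ h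
        simp only [Fin.mk.injEq, add_left_inj] at h
        exact Subtype.ext (Nat.eq_of_mul_eq_mul_left (by omega) h))
    simpa using this
  have h2 : 1 ≤ s / r := (Nat.one_le_div_iff (by omega)).mpr hrs
  have h3 := Nat.lt_mul_div_succ s (show 0 < r by omega)
  nlinarith

lemma good_card (s r : ℕ) (hr : 1 ≤ r) (hrs : r ≤ s) (B : Finset (Fin s))
    (hB : 7 * s ≤ 8 * B.card) :
    r ≤ 2 * (Finset.univ.filter (fun j : Fin r =>
      s ≤ 4 * r * (B.filter (fun i : Fin s => (i : ℕ) % r = j)).card)).card := by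
  let P : Fin r → Prop := fun j => s ≤ 4 * r * (B.filter (fun i : Fin s => (i : ℕ) % r = j)).card
  letI : DecidablePred P := fun j => Nat.decLe _ _
  change r ≤ 2 * (Finset.univ.filter P).card
  have hsplit := Finset.card_filter_add_card_filter_not (s := (Finset.univ : Finset (Fin r))) P
  rw [Finset.card_univ, Fintype.card_fin] at hsplit
  have hrem : ∑ j : Fin r, (Bᶜ.filter (fun i : Fin s => (i : ℕ) % r = j)).card = Bᶜ.card := by
    rw [Finset.card_eq_sum_card_fiberwise (f := fun i : Fin s => (⟨i % r, Nat.mod_lt _ hr⟩ : Fin r))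
      (t := Finset.univ) (by intro i _; simp)]
    simp [Fin.ext_iff]
  have hbad : (Finset.univ.filter (fun j => ¬ P j)).card * s ≤ 4 * r * Bᶜ.card := by
    rw [← hrem, Finset.mul_sum, ← smul_eq_mul, ← Finset.sum_const]
    refine le_trans (Finset.sum_le_sum (fun j hj => ?_)) (Finset.sum_le_sum_of_subset
      (Finset.filter_subset (fun j => ¬ P j) Finset.univ))
    have hj' := (Finset.mem_filter.mp hj).2
    simp only [P, not_le] at hj'
    have hf := fiber_card s r hr hrs j
    have hu : (Finset.univ.filter (fun i : Fin s => (i : ℕ) % r = j)).card =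
        (B.filter (fun i : Fin s => (i : ℕ) % r = j)).card +
        (Bᶜ.filter (fun i : Fin s => (i : ℕ) % r = j)).card := by
      rw [← Finset.card_union_of_disjoint (Finset.disjoint_filter_filter disjoint_compl_right),
        ← Finset.filter_union, Finset.union_compl]
    rw [hu] at hf
    nlinarith
  have hc := Finset.card_add_card_compl B
  rw [Fintype.card_fin] at hc
  have h5 : (Finset.univ.filter (fun j => ¬ P j)).card * s * 2 ≤ r * s := by nlinarith
  have h6 : 2 * (Finset.univ.filter (fun j => ¬ P j)).card ≤ r :=
    Nat.le_of_mul_le_mul_right (by linarith) (show 0 < s by omega)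
  omega

/-- Scattering lemma. There are absolute constants c₀ ∈ (1/2, 1) and c₁ > 0 such
that for all integers s ≥ r ≥ 1 there is a matrix W ∈ ℝ^{s×r} with ‖W‖_F ≤ 1 such that for every
B ⊂ {1,…,s} with |B| ≥ c₀s and every q ∈ [1,2], ‖W_{B*}‖_{S_q} ≥ c₁ r^{1/q − 1/2}. -/
theorem stmt13 :
    ∃ c0 c1 : ℝ, c0 ∈ Set.Ioo (1 / 2 : ℝ) 1 ∧ 0 < c1 ∧
    ∀ s r : ℕ, 1 ≤ r → r ≤ s →
    ∃ W : Matrix (Fin s) (Fin r) ℝ, frobNorm W ≤ 1 ∧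
      ∀ B : Finset (Fin s), c0 * (s : ℝ) ≤ (B.card : ℝ) →
      ∀ q ∈ Set.Icc (1 : ℝ) 2,
        c1 * (r : ℝ) ^ (1 / q - 1 / 2) ≤
          schattenNorm (W.submatrix (fun i : {x // x ∈ B} => (i : Fin s)) id) q := by
  classical
  refine ⟨7 / 8, 1 / 4, ⟨by norm_num, by norm_num⟩, by norm_num, ?_⟩
  intro s r hr hrs
  have hs0 : (0 : ℝ) < s := by exact_mod_cast (show 0 < s by omega)
  have hr0 : (0 : ℝ) < r := by exact_mod_cast hr
  refine ⟨Matrix.of fun i j => if (i : ℕ) % r = j then 1 / Real.sqrt s else 0, ?_, ?_⟩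
  · unfold frobNorm
    rw [Real.sqrt_le_one]
    have : ∀ i : Fin s, ∑ j : Fin r, (Matrix.of (fun (i : Fin s) (j : Fin r) =>
        if (i : ℕ) % r = j then 1 / Real.sqrt s else 0) i j) ^ 2 = 1 / (s : ℝ) := by
      intro i
      rw [Finset.sum_eq_single (⟨i % r, Nat.mod_lt _ hr⟩ : Fin r)]
      · simp [Real.sq_sqrt hs0.le]
      · intro j _ hj
        have : (i : ℕ) % r ≠ j := fun h => hj (Fin.ext h.symm)
        simp [this]
      · simp
    rw [Finset.sum_congr rfl (fun i _ => this i)]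
    simp [hs0.ne']
  intro B hB q hq
  have hB' : 7 * s ≤ 8 * B.card := by
    have : (7 : ℝ) * s ≤ 8 * B.card := by linarith
    exact_mod_cast this
  have hgood := good_card s r hr hrs B hB'
  set G := (Finset.univ.filter (fun j : Fin r =>
      s ≤ 4 * r * (B.filter (fun i : Fin s => (i : ℕ) % r = j)).card)) with hG
  have hGB : G.card ≤ B.card := by
    have : ∀ j ∈ G, ∃ i ∈ B, (i : ℕ) % r = j := by
      intro j hj
      have h1 := (Finset.mem_filter.mp hj).2
      have : (B.filter (fun i : Fin s => (i : ℕ) % r = j)).card ≠ 0 := by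
        intro h
        rw [h] at h1
        omega
      obtain ⟨i, hi⟩ := Finset.card_ne_zero.mp this
      exact ⟨i, (Finset.mem_filter.mp hi).1, (Finset.mem_filter.mp hi).2⟩
    have hsub : G ⊆ B.image (fun i : Fin s => (⟨i % r, Nat.mod_lt _ hr⟩ : Fin r)) := by
      intro j hj
      obtain ⟨i, hi, hij⟩ := this j hj
      exact Finset.mem_image.mpr ⟨i, hi, Fin.ext hij⟩
    exact (Finset.card_le_card hsub).trans Finset.card_image_le
  have hGr : G.card ≤ r := by simpa using Finset.card_le_univ G
  unfold schattenNorm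
  apply final_num r G.card _ hr hgood (by simp [hGB, hGr]) _ (singularValue_nonneg' _) _ q hq
  intro k hk hkG
  obtain ⟨T, hTG, hT⟩ := Finset.exists_subset_card_eq hkG
  obtain ⟨V, hV, hV0⟩ := exists_coordSub T
  refine le_singularValue _ k hk _ V (hV.trans hT) ?_
  intro v hv hv1
  have hv2 : ∑ j, v j ^ 2 = 1 := by
    unfold l2norm at hv1
    exact Real.sqrt_eq_one.mp hv1
  have hentry : ∀ i : Fin s, ∑ j : Fin r, (if (i : ℕ) % r = j then 1 / Real.sqrt s else 0) * v j
      = 1 / Real.sqrt s * v ⟨i % r, Nat.mod_lt _ hr⟩ := by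
    intro i
    rw [Finset.sum_eq_single (⟨i % r, Nat.mod_lt _ hr⟩ : Fin r)]
    · simp
    · intro j _ hj
      have : (i : ℕ) % r ≠ j := fun h => hj (Fin.ext h.symm)
      simp [this]
    · simp
  unfold l2norm
  apply Real.le_sqrt_of_sq_le
  simp only [Matrix.mulVec, dotProduct, Matrix.submatrix_apply, Matrix.of_apply, id]
  simp only [hentry]
  rw [Finset.sum_coe_sort B (fun i : Fin s => (1 / Real.sqrt s * v ⟨i % r, Nat.mod_lt _ hr⟩) ^ 2)]
  rw [← Finset.sum_fiberwise_of_maps_to (t := Finset.univ)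
    (g := fun i : Fin s => (⟨i % r, Nat.mod_lt _ hr⟩ : Fin r)) (by intro i _; simp)]
  have hl : (1 / (2 * Real.sqrt r)) ^ 2 = ∑ j, 1 / (4 * (r : ℝ)) * v j ^ 2 := by
    rw [← Finset.mul_sum, hv2, div_pow, mul_pow, Real.sq_sqrt hr0.le]
    norm_num
  rw [hl]
  apply Finset.sum_le_sum
  intro j _
  have hc : ∑ i ∈ B.filter (fun i : Fin s => (⟨i % r, Nat.mod_lt _ hr⟩ : Fin r) = j),
      (1 / Real.sqrt s * v ⟨i % r, Nat.mod_lt _ hr⟩) ^ 2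
      = (B.filter (fun i : Fin s => (i : ℕ) % r = j)).card * (1 / (s : ℝ) * v j ^ 2) := by
    rw [Finset.sum_congr rfl (g := fun _ => 1 / (s : ℝ) * v j ^ 2)]
    · simp [Fin.ext_iff]
    · intro i hi
      rw [(Finset.mem_filter.mp hi).2, mul_pow, div_pow, Real.sq_sqrt hs0.le, one_pow]
  rw [hc]
  by_cases hj : j ∈ T
  · have h1 := (Finset.mem_filter.mp (hTG hj)).2
    have h2 : (s : ℝ) ≤ 4 * r * (B.filter (fun i : Fin s => (i : ℕ) % r = j)).card := by
      exact_mod_cast h1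
    rw [← mul_assoc]
    apply mul_le_mul_of_nonneg_right _ (sq_nonneg _)
    rw [mul_one_div, div_le_div_iff₀ (by positivity) hs0]
    linarith
  · simp [hV0 v hv j hj]

end
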